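/- Let Γ be a subgroup of the cyclic group generated by the cyclic shift (1,…,n), and let I_0, I_1 ⊆ [n] be disjoint with I_0 ∪ I_1 ⊊ [n], defining a complete set of fixings for every permutation in Γ. If { x ∈ F(I_0, I_1) : x ⪰ γ(x) for all γ ∈ Γ } is nonempty, then there exists x ∈ F(I_0, I_1) such that x ≻ γ(x) (strictly) for all γ ∈ Γ with γ ≠ id. -/

import Mathlib

/-- Strict lexicographic order on binary vectors: at the first differing index, `x` has 1. -/
def lexGt {n : ℕ} (x y : Fin n → Bool) : Prop :=
  ∃ j : Fin n, (∀ i : Fin n, i < j → x i = y i) ∧ y j < x j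

/-- Non-strict lexicographic order `x ⪰ y`. -/
def lexGe {n : ℕ} (x y : Fin n → Bool) : Prop :=
  x = y ∨ lexGt x y

/-- Coordinate-permuting action: `(γ • x) i = x (γ⁻¹ i)`. -/
def permAct {n : ℕ} (γ : Equiv.Perm (Fin n)) (x : Fin n → Bool) : Fin n → Bool :=
  fun i => x (γ⁻¹ i)

/-- `FF I0 I1` is the set of binary vectors fixed to 0 on `I0` and to 1 on `I1`. -/
def FF {n : ℕ} (I0 I1 : Finset (Fin n)) : Set (Fin n → Bool) :=
  {x | (∀ i ∈ I0, x i = false) ∧ ∀ i ∈ I1, x i = true}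

/-!
Extend words of length `n` to words of period `n` on `ℕ`, so that cyclic shifts become suffixes,
and let `x` respect the fixings and be lexicographically maximal under `Γ`. If `x` is not strictly
maximal, let `t < n` be the least positive period of `x` among the shifts in `Γ`. Since `n - t` is
such a period too, `2 * t ≤ n`. If a free entry among the last `t` entries of `x` is 1, lowering it
to 0 gives a strictly maximal word. Otherwise, at the first free index `i`, completeness for the
shift by `n - t` forces `x i = 0`, and then completeness for the shift by `t` forces `i < t`.

In that case the word `z` that is 1 at `i` and 0 at all other free positions is strictly maximal.
Indeed, for each shift it lies below a completeness witness with entry 1 at `i` and agrees with it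
up to `i`, so if it were not strictly above its shift by `s`, the two would agree up to `i`. As
`2 * i < n`, the first multiple of `s` beyond `i` is less than `n`, and comparing `x` with its shift
by this multiple contradicts `x i = 0`.
-/

section PiLex

variable {ι : Type*} {β : ι → Type*} [LinearOrder ι] [∀ i, PartialOrder (β i)]

theorem apply_le_apply_of_toLex_le {u v : ∀ i, β i} {m : ι} (huv : toLex u ≤ toLex v)
    (hvu : ∀ a < m, v a ≤ u a) : u m ≤ v m := by
  rcases huv.eq_or_lt with heq | ⟨k, heq, hlt⟩
  · exact (congrFun (toLex.injective heq) m).le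
  · rcases lt_trichotomy k m with hkm | rfl | hmk
    · exact absurd (hvu k hkm) hlt.not_ge
    · exact hlt.le
    · exact (heq m hmk).le

theorem eq_and_eq_of_toLex_le_of_le [WellFoundedLT ι] {u u' v v' : ∀ i, β i} {m : ι}
    (hu : toLex u' ≤ toLex u) (hv : toLex v ≤ toLex v')
    (huv : ∀ a < m, v a = u a) (hle : ∀ a < m, v' a ≤ u' a) :
    ∀ a < m, u' a = u a ∧ v' a = v a := by
  intro a
  induction a using WellFoundedLT.induction with
  | ind a ih =>
    intro ham
    have hu_a : u' a ≤ u a :=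
      apply_le_apply_of_toLex_le hu fun b hb => (ih b hb (hb.trans ham)).1.ge
    have hv_a : v a ≤ v' a :=
      apply_le_apply_of_toLex_le hv fun b hb => (ih b hb (hb.trans ham)).2.le
    have huv_a := huv a ham
    have hle_a := hle a ham
    exact ⟨hu_a.antisymm (huv_a.ge.trans (hv_a.trans hle_a)),
      (hle_a.trans (hu_a.trans huv_a.ge)).antisymm hv_a⟩

end PiLex

section Words

open Function (Periodic)

variable {α : Type*}

theorem apply_add_mul_eq {z : ℕ → α} {s m : ℕ} (tie : ∀ a < m, z (a + s) = z a) (k : ℕ) {b : ℕ}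
    (hb : b + s * k < m + s) : z (b + s * k) = z b := by
  induction k with
  | zero => rw [Nat.mul_zero, Nat.add_zero]
  | succ k ih =>
    rw [Nat.mul_succ] at hb ⊢
    rw [← Nat.add_assoc, tie _ (by omega), ih (by omega)]

theorem mul_div_add_one_lt {s i n : ℕ} (hs : s < n) (hi : i + i < n) : s * (i / s + 1) < n := by
  rcases lt_or_ge i s with his | hsi
  · rwa [Nat.div_eq_of_lt his, Nat.zero_add, Nat.mul_one]
  · have := Nat.mul_div_le i s
    rw [Nat.mul_succ]
    omega

/-- The suffix of the infinite word `x` that starts at position `s`, to be compared with other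
words lexicographically. When `x` has period `n`, it represents the cyclic shift of a word of
length `n` by `s`. -/
def lexShift (x : ℕ → α) (s : ℕ) : Lex (ℕ → α) :=
  toLex fun a => x (a + s)

variable [LinearOrder α] {x y z : ℕ → α} {s t i j n : ℕ}

theorem lexShift_lt_of_lowered (hxt : Periodic x t) (ht : 0 < t) (htj : t ≤ j)
    (hx : lexShift x s ≤ toLex x) (hs : 0 < s) (hsj : Periodic x s → s ≤ j)
    (hzx : z ≤ x) (heq : ∀ a < j, z a = x a) (hne : z j ≠ x j) :
    lexShift z s < toLex z := by
  by_contra hlt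
  have tie : ∀ a < j, x (a + s) = x a ∧ z (a + s) = z a :=
    eq_and_eq_of_toLex_le_of_le hx (not_lt.1 hlt) heq fun a _ => hzx (a + s)
  have hxs : Periodic x s := fun a => calc
    x (a + s) = x (a % t + s) := by
      rw [← hxt.map_mod_nat (a + s), ← hxt.map_mod_nat (a % t + s), Nat.mod_add_mod]
    _ = x (a % t) := (tie _ ((Nat.mod_lt a ht).trans_le htj)).1
    _ = x a := hxt.map_mod_nat a
  have hlt_j : j - s < j := Nat.sub_lt (ht.trans_le htj) hs
  obtain ⟨hx_j, hz_j⟩ := tie (j - s) hlt_j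
  rw [Nat.sub_add_cancel (hsj hxs)] at hx_j hz_j
  exact hne (hz_j.trans ((heq _ hlt_j).trans hx_j.symm))

theorem apply_add_le_of_raised {h r : ℕ} (hx : lexShift x h ≤ toLex x)
    (hzx : ∀ a < i, z a = x a) (hle : ∀ a, i < a → a ≤ i + h → z a ≤ x a)
    (hih : i < h) (hri : r ≤ i) (tie : ∀ a < r, z (a + h) = z a) : z (r + h) ≤ x r :=
  calc
    z (r + h) ≤ x (r + h) := hle _ (by omega) (by omega)
    _ ≤ x r := apply_le_apply_of_toLex_le hx fun a ha => calc
      x a = z (a + h) := by rw [tie a ha, hzx a (by omega)]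
      _ ≤ x (a + h) := hle _ (by omega) (by omega)

/-- If `z` were not above its suffix at `s`, it would agree with that suffix on longer and longer
prefixes. The comparison of `x` with its suffix at the first multiple of `s` beyond `i` carries
this up to the position where the peak `z i` has to reappear, which `x i < z i` rules out. -/
theorem lexShift_lt_of_raised (hs : 0 < s) (hx : lexShift x (s * (i / s + 1)) ≤ toLex x)
    (hy : lexShift y s ≤ toLex y) (hzy : z ≤ y) (hzy_eq : ∀ a < i + 1, z a = y a)
    (hzx : ∀ a < i, z a = x a) (hi : x i < z i)
    (hle : ∀ a, i < a → a ≤ i + s * (i / s + 1) → z a ≤ x a) :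
    lexShift z s < toLex z := by
  by_contra hlt
  have hz : toLex z ≤ lexShift z s := not_lt.1 hlt
  set k := i / s
  have hki : s * k ≤ i := Nat.mul_div_le i s
  have hih : i < s * (k + 1) := Nat.lt_mul_div_succ i hs
  have hk : s * (k + 1) = s * k + s := Nat.mul_succ s k
  have bound : ∀ r ≤ i, (∀ a < r + s * k, z (a + s) = z a) → z (r + s * k + s) ≤ x r := by
    intro r hri tie
    rw [Nat.add_assoc, ← hk]
    exact apply_add_le_of_raised hx hzx hle hih hri fun a ha =>
      apply_add_mul_eq tie (k + 1) (by omega)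
  have hxz : ∀ r ≤ i, x r ≤ z r := fun r hri =>
    hri.lt_or_eq.elim (fun h => (hzx r h).ge) fun h => h ▸ hi.le
  have tie_init : ∀ a < i + 1, z (a + s) = z a := fun a ha =>
    (eq_and_eq_of_toLex_le_of_le hy hz hzy_eq (fun a _ => hzy (a + s)) a ha).2
  have tie : ∀ a, a ≤ i + s * k → z (a + s) = z a := by
    intro a
    induction a using Nat.strong_induction_on with
    | _ a ih =>
      intro ha
      rcases Nat.lt_or_ge a (i + 1) with hai | hia
      · exact tie_init a hai
      · obtain ⟨r, rfl⟩ : ∃ r, a = r + s * k := ⟨a - s * k, by omega⟩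
        have tie_lt : ∀ b < r + s * k, z (b + s) = z b := fun b hb => ih b hb (by omega)
        refine le_antisymm ?_ (apply_le_apply_of_toLex_le hz fun b hb => (tie_lt b hb).le)
        calc
          z (r + s * k + s) ≤ x r := bound r (by omega) tie_lt
          _ ≤ z r := hxz r (by omega)
          _ = z (r + s * k) := (apply_add_mul_eq tie_lt k (by omega)).symm
  refine hi.not_ge ?_
  calc
    z i = z (i + s * k + s) := by
      rw [tie _ le_rfl, apply_add_mul_eq (fun a ha => tie a (Nat.le_of_lt ha)) k (by omega)]
    _ ≤ x i := bound i le_rfl fun a ha => tie a ha.le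

theorem lt_period_of_lexShift_le (hxt : Periodic x t) (hy : lexShift y t ≤ toLex y)
    (ht : 0 < t) (hyx : ∀ a < i, y a = x a) (hi : x i < y i) : i < t := by
  by_contra! hti
  have hle : y (i - t + t) ≤ y (i - t) := apply_le_apply_of_toLex_le hy fun a ha => by
    rw [hyx a (by omega), hyx (a + t) (by omega), hxt]
  refine hi.not_ge ?_
  calc
    y i = y (i - t + t) := by rw [Nat.sub_add_cancel hti]
    _ ≤ y (i - t) := hle
    _ = x (i - t + t) := by rw [hyx _ (by omega), hxt]
    _ = x i := by rw [Nat.sub_add_cancel hti]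

theorem apply_le_of_le_last_period (hxn : Periodic x n) (hyn : Periodic y n)
    (hxt : Periodic x t) (htn : t ≤ n) (hy : lexShift y (n - t) ≤ toLex y)
    (hyx : ∀ a < i, y a = x a) (ht : 0 < t) (hlast : ∀ a, n - t ≤ a → a < n → x a ≤ y a) :
    x i ≤ y i := by
  have hshift : ∀ a ≤ i, x a ≤ y (a + (n - t)) := by
    intro a hai
    rcases Nat.lt_or_ge a t with hat | hta
    · calc
        x a = x (a + (n - t)) := by
          rw [← hxt (a + (n - t)), ← hxn a, show a + (n - t) + t = a + n by omega]
        _ ≤ y (a + (n - t)) := hlast _ (by omega) (by omega)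
    · rw [show a + (n - t) = a - t + n by omega, hyn, hyx _ (by omega), ← hxt (a - t),
        Nat.sub_add_cancel hta]
  exact (hshift i le_rfl).trans <| apply_le_apply_of_toLex_le hy fun a ha =>
    (hyx a ha).le.trans (hshift a ha.le)

/-- The word `x` is lexicographically at least each of its suffixes at positions in `S`. -/
def ShiftMax (S : Set ℕ) (x : ℕ → α) : Prop :=
  ∀ s ∈ S, lexShift x s ≤ toLex x

/-- The word `x`, thought of as having period `n`, is lexicographically larger than each of its
suffixes at positions in `S`, the trivial shifts by multiples of `n` being excluded by taking
`0 < s < n`. -/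
def StrictShiftMax (S : Set ℕ) (n : ℕ) (x : ℕ → α) : Prop :=
  ∀ s ∈ S, 0 < s → s < n → lexShift x s < toLex x

variable {S : Set ℕ}

theorem ShiftMax.exists_minimal_period (hS : ∀ s ∈ S, s ≤ n → n - s ∈ S) (hxn : Periodic x n)
    (hx : ShiftMax S x) (hstrict : ¬ StrictShiftMax S n x) :
    ∃ t ∈ S, 0 < t ∧ t < n ∧ Periodic x t ∧
      ∀ s ∈ S, 0 < s → s < n → Periodic x s → s + t ≤ n := by
  have hperiod : ∃ t, t ∈ S ∧ 0 < t ∧ t < n ∧ Periodic x t := by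
    unfold StrictShiftMax at hstrict
    push Not at hstrict
    obtain ⟨s, hsS, hs, hsn, hxs⟩ := hstrict
    exact ⟨s, hsS, hs, hsn, congrFun (toLex.injective ((hx s hsS).antisymm (not_lt.1 hxs)))⟩
  classical
  obtain ⟨htS, ht, htn, hxt⟩ := Nat.find_spec hperiod
  refine ⟨Nat.find hperiod, htS, ht, htn, hxt, fun s hsS hs hsn hxs => ?_⟩
  have hcompl : Periodic x (n - s) := fun a => by
    rw [← hxs, Nat.add_assoc, Nat.sub_add_cancel hsn.le, hxn]
  have := Nat.find_min' hperiod ⟨hS s hsS hsn.le, by omega, by omega, hcompl⟩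
  omega

theorem ShiftMax.strictShiftMax_of_lowered (hx : ShiftMax S x) (hxt : Periodic x t)
    (ht : 0 < t) (htj : t ≤ j)
    (hperiod : ∀ s ∈ S, 0 < s → s < n → Periodic x s → s ≤ j)
    (hzx : z ≤ x) (heq : ∀ a < j, z a = x a) (hne : z j ≠ x j) : StrictShiftMax S n z :=
  fun s hsS hs hsn =>
    lexShift_lt_of_lowered hxt ht htj (hx s hsS) hs (hperiod s hsS hs hsn) hzx heq hne

theorem ShiftMax.strictShiftMax_of_raised (hS : ∀ s ∈ S, ∀ k, s * k ∈ S) (hx : ShiftMax S x)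
    (hin : i + i < n)
    (hy : ∀ s ∈ S, ∃ y, lexShift y s ≤ toLex y ∧ z ≤ y ∧ ∀ a < i + 1, z a = y a)
    (hzx : ∀ a < i, z a = x a) (hi : x i < z i) (hle : ∀ a, i < a → a < i + n → z a ≤ x a) :
    StrictShiftMax S n z := by
  intro s hsS hs hsn
  obtain ⟨y, hys, hzy, hzy_eq⟩ := hy s hsS
  have hmul := mul_div_add_one_lt hsn hin
  exact lexShift_lt_of_raised hs (hx _ (hS s hsS _)) hys hzy hzy_eq hzx hi
    fun a hia hai => hle a hia (by omega)

end Words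

section CyclicExt

variable {α : Type*} {n : ℕ} [NeZero n]

/-- The infinite word of period `n` that extends the word `x` of length `n`; it turns cyclic
shifts into suffixes, with positions in `ℕ` instead of residues. -/
def cyclicExt (x : Fin n → α) (a : ℕ) : α :=
  x (Fin.ofNat n a)

theorem cyclicExt_periodic (x : Fin n → α) : Function.Periodic (cyclicExt x) n := fun a =>
  congrArg x (Fin.ext (by simp))

theorem cyclicExt_val (x : Fin n → α) (i : Fin n) : cyclicExt x i = x i :=
  congrArg x (Fin.ofNat_val_eq_self i)

theorem cyclicExt_eq_of_lt {x y : Fin n → α} {a m : ℕ} (h : ∀ j : Fin n, j < m → x j = y j)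
    (hm : m ≤ n) (ha : a < m) : cyclicExt x a = cyclicExt y a :=
  h _ (by rwa [Fin.val_ofNat, Nat.mod_eq_of_lt (ha.trans_le hm)])

theorem ofNat_ne_of_lt_of_lt_add {i : Fin n} {a : ℕ} (hia : i < a) (hai : a < i + n) :
    Fin.ofNat n a ≠ i := by
  rintro rfl
  rw [Fin.val_ofNat] at hia hai
  have hmod := Nat.mod_add_div a n
  have hpos : 0 < a / n := Nat.pos_of_ne_zero fun h => by simp [h] at hmod; omega
  have := Nat.mul_le_mul_left n hpos
  omega

theorem toLex_cyclicExt_strictMono [LinearOrder α] :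
    StrictMono fun x : Lex (Fin n → α) => toLex (cyclicExt (ofLex x)) := by
  rintro x y ⟨k, heq, hlt⟩
  exact ⟨k, fun a ha => cyclicExt_eq_of_lt heq k.isLt.le ha,
    (cyclicExt_val (ofLex x) k).trans_lt (hlt.trans_eq (cyclicExt_val (ofLex y) k).symm)⟩

theorem toLex_cyclicExt_lt_iff [LinearOrder α] {x y : Fin n → α} :
    toLex (cyclicExt x) < toLex (cyclicExt y) ↔ toLex x < toLex y :=
  (toLex_cyclicExt_strictMono (n := n) (α := α)).lt_iff_lt (a := toLex x) (b := toLex y)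

theorem toLex_cyclicExt_le_iff [LinearOrder α] {x y : Fin n → α} :
    toLex (cyclicExt x) ≤ toLex (cyclicExt y) ↔ toLex x ≤ toLex y :=
  (toLex_cyclicExt_strictMono (n := n) (α := α)).le_iff_le (a := toLex x) (b := toLex y)

end CyclicExt

section Lexicographic

variable {n : ℕ} {x y : Fin n → Bool}

theorem lexGt_iff_toLex_lt : lexGt x y ↔ toLex y < toLex x :=
  exists_congr fun _ => and_congr_left' <| forall₂_congr fun _ _ => eq_comm

theorem lexGe_iff_toLex_le : lexGe x y ↔ toLex y ≤ toLex x := by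
  rw [lexGe, lexGt_iff_toLex_lt, eq_comm, ← toLex.injective.eq_iff]
  exact le_iff_eq_or_lt.symm

end Lexicographic

section Rotation

variable {n : ℕ} {Γ : Subgroup (Equiv.Perm (Fin n))}

/-- The exponents `s` for which the `s`-th power of the cyclic shift belongs to `Γ`. -/
def shiftExponents (Γ : Subgroup (Equiv.Perm (Fin n))) : Set ℕ :=
  {s | finRotate n ^ s ∈ Γ}

theorem mul_mem_shiftExponents {s : ℕ} (hs : s ∈ shiftExponents Γ) (k : ℕ) :
    s * k ∈ shiftExponents Γ := by
  rw [shiftExponents, Set.mem_ofPred_eq, pow_mul]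
  exact Γ.pow_mem hs k

variable [NeZero n]

theorem finRotate_pow_apply (s : ℕ) (i : Fin n) :
    (finRotate n ^ s) i = Fin.ofNat n (i + s) := by
  induction s with
  | zero => simp
  | succ s ih =>
    rw [pow_succ', Equiv.Perm.mul_apply, ih, finRotate_apply]
    ext
    simp [Fin.val_add, Nat.add_assoc]

theorem finRotate_pow_self : finRotate n ^ n = 1 := by
  ext i
  simp [finRotate_pow_apply, Nat.mod_eq_of_lt i.isLt]

theorem sub_mem_shiftExponents {s : ℕ} (hs : s ∈ shiftExponents Γ) (hsn : s ≤ n) :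
    n - s ∈ shiftExponents Γ := by
  rw [shiftExponents, Set.mem_ofPred_eq, pow_sub _ hsn, finRotate_pow_self, one_mul]
  exact Γ.inv_mem hs

theorem exists_shiftExponent (hΓ : Γ ≤ Subgroup.zpowers (finRotate n)) {γ : Equiv.Perm (Fin n)}
    (hγ : γ ∈ Γ) : ∃ s ∈ shiftExponents Γ, s < n ∧ γ = (finRotate n ^ s)⁻¹ := by
  classical
  have hpow := mem_zpowers_iff_mem_range_orderOf.1 (hΓ (Γ.inv_mem hγ))
  obtain ⟨s, hs, hsγ⟩ := Finset.mem_image.1 hpow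
  have hsγ : finRotate n ^ s = γ⁻¹ := hsγ
  refine ⟨s, ?_, ?_, by rw [hsγ, inv_inv]⟩
  · rw [shiftExponents, Set.mem_ofPred_eq, hsγ]
    exact Γ.inv_mem hγ
  · exact (Finset.mem_range.1 hs).trans_le
      (orderOf_le_of_pow_eq_one (NeZero.pos n) finRotate_pow_self)

theorem toLex_cyclicExt_permAct (x : Fin n → Bool) (s : ℕ) :
    toLex (cyclicExt (permAct (finRotate n ^ s)⁻¹ x)) = lexShift (cyclicExt x) s := by
  funext a
  simp only [lexShift, Pi.toLex_apply, cyclicExt, permAct, inv_inv, finRotate_pow_apply]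
  congr 1
  ext
  simp

theorem lexGt_permAct_iff (x : Fin n → Bool) (s : ℕ) :
    lexGt x (permAct (finRotate n ^ s)⁻¹ x) ↔ lexShift (cyclicExt x) s < toLex (cyclicExt x) := by
  rw [lexGt_iff_toLex_lt, ← toLex_cyclicExt_permAct, toLex_cyclicExt_lt_iff]

theorem lexGe_permAct_iff (x : Fin n → Bool) (s : ℕ) :
    lexGe x (permAct (finRotate n ^ s)⁻¹ x) ↔ lexShift (cyclicExt x) s ≤ toLex (cyclicExt x) := by
  rw [lexGe_iff_toLex_le, ← toLex_cyclicExt_permAct, toLex_cyclicExt_le_iff]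

theorem shiftMax_cyclicExt {x : Fin n → Bool} (hx : ∀ γ ∈ Γ, lexGe x (permAct γ x)) :
    ShiftMax (shiftExponents Γ) (cyclicExt x) := fun s hs =>
  (lexGe_permAct_iff x s).1 (hx _ (Γ.inv_mem hs))

theorem StrictShiftMax.lexGt_permAct (hΓ : Γ ≤ Subgroup.zpowers (finRotate n)) {x : Fin n → Bool}
    (hx : StrictShiftMax (shiftExponents Γ) n (cyclicExt x)) :
    ∀ γ ∈ Γ, γ ≠ 1 → lexGt x (permAct γ x) := by
  intro γ hγ hγ1
  obtain ⟨s, hsΓ, hsn, rfl⟩ := exists_shiftExponent hΓ hγ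
  refine (lexGt_permAct_iff x s).2 (hx s hsΓ (Nat.pos_of_ne_zero ?_) hsn)
  rintro rfl
  exact hγ1 (by rw [pow_zero, inv_one])

end Rotation

section Fixings

variable {n : ℕ} {I0 I1 : Finset (Fin n)} {x y z : Fin n → Bool} {i j : Fin n}

theorem eq_of_mem_FF (hx : x ∈ FF I0 I1) (hy : y ∈ FF I0 I1) (hj : j ∈ I0 ∪ I1) : x j = y j := by
  rcases Finset.mem_union.1 hj with h | h
  · rw [hx.1 j h, hy.1 j h]
  · rw [hx.2 j h, hy.2 j h]

theorem mem_FF_of_eqOn (hx : x ∈ FF I0 I1) (h : ∀ j ∈ I0 ∪ I1, z j = x j) : z ∈ FF I0 I1 :=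
  ⟨fun j hj => (h j (Finset.mem_union_left _ hj)).trans (hx.1 j hj),
    fun j hj => (h j (Finset.mem_union_right _ hj)).trans (hx.2 j hj)⟩

variable [NeZero n] {S : Set ℕ} {t : ℕ}

theorem strictShiftMax_cyclicExt_update_false (hx : ShiftMax S (cyclicExt x))
    (hxt : Function.Periodic (cyclicExt x) t) (ht : 0 < t) (htt : t + t ≤ n)
    (hmin : ∀ s ∈ S, 0 < s → s < n → Function.Periodic (cyclicExt x) s → s + t ≤ n)
    (htj : n - t ≤ j) (hj : x j = true) :
    StrictShiftMax S n (cyclicExt (Function.update x j false)) := by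
  have hperiod : ∀ s ∈ S, 0 < s → s < n → Function.Periodic (cyclicExt x) s → s ≤ j :=
    fun s hsS hs hsn hxs => (Nat.le_sub_of_add_le (hmin s hsS hs hsn hxs)).trans htj
  refine hx.strictShiftMax_of_lowered hxt ht ((Nat.le_sub_of_add_le htt).trans htj) hperiod
    (fun a => update_le_self_iff.2 (Bool.false_le _) _) (fun a ha => ?_) ?_
  · exact cyclicExt_eq_of_lt (fun k hk => Function.update_of_ne (Fin.ne_of_lt hk) _ _) j.isLt.le ha
  · simp [cyclicExt_val, hj]

theorem strictShiftMax_cyclicExt_piecewise (hS : ∀ s ∈ S, ∀ k, s * k ∈ S)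
    (hx : ShiftMax S (cyclicExt x)) (hxF : x ∈ FF I0 I1) (hi : i ∉ I0 ∪ I1)
    (hfirst : ∀ j < i, j ∈ I0 ∪ I1) (hxi : x i = false) (hin : (i : ℕ) + i < n)
    (hy : ∀ s ∈ S, ∃ y ∈ FF I0 I1, lexShift (cyclicExt y) s ≤ toLex (cyclicExt y) ∧ y i = true) :
    StrictShiftMax S n
      (cyclicExt ((I0 ∪ I1).piecewise x (Function.update (fun _ => false) i true))) := by
  set z := (I0 ∪ I1).piecewise x (Function.update (fun _ => false) i true)
  have hz_fixed : ∀ j ∈ I0 ∪ I1, z j = x j := fun j hj => Finset.piecewise_eq_of_mem _ _ _ hj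
  have hz_free : ∀ j ∉ I0 ∪ I1, j ≠ i → z j = false := fun j hj hji =>
    (Finset.piecewise_eq_of_notMem _ _ _ hj).trans (Function.update_of_ne hji _ _)
  have hzi : z i = true :=
    (Finset.piecewise_eq_of_notMem _ _ _ hi).trans (Function.update_self _ _ _)
  have hz_le : ∀ y ∈ FF I0 I1, ∀ j ≠ i, z j ≤ y j := fun y hyF j hji => by
    by_cases hj : j ∈ I0 ∪ I1
    · exact ((hz_fixed j hj).trans (eq_of_mem_FF hxF hyF hj)).le
    · exact (hz_free j hj hji).trans_le (Bool.false_le _)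
  refine hx.strictShiftMax_of_raised hS hin (fun s hs => ?_)
    (fun a ha => cyclicExt_eq_of_lt (fun j hj => hz_fixed j (hfirst j hj)) i.isLt.le ha)
    (by simp [cyclicExt_val, hxi, hzi])
    (fun a hia hai => hz_le x hxF _ (ofNat_ne_of_lt_of_lt_add hia hai))
  obtain ⟨y, hyF, hys, hyi⟩ := hy s hs
  have hzyi : z i = y i := hzi.trans hyi.symm
  refine ⟨cyclicExt y, hys, fun a => ?_, fun a ha => cyclicExt_eq_of_lt (fun j hj => ?_) i.isLt ha⟩
  · by_cases hai : Fin.ofNat n a = i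
    · exact (congrArg z hai).trans (hzyi.trans (congrArg y hai).symm) |>.le
    · exact hz_le y hyF _ hai
  · rcases (Nat.lt_succ_iff.1 hj).lt_or_eq with hji | hji
    · exact (hz_fixed j (hfirst j hji)).trans (eq_of_mem_FF hxF hyF (hfirst j hji))
    · rwa [Fin.ext hji]

theorem apply_eq_false_of_first_free (hxF : x ∈ FF I0 I1) (hyF : y ∈ FF I0 I1)
    (hfirst : ∀ j < i, j ∈ I0 ∪ I1) (hxt : Function.Periodic (cyclicExt x) t) (ht : 0 < t)
    (htn : t ≤ n) (hlast : ∀ j : Fin n, n - t ≤ j → j ∉ I0 ∪ I1 → x j = false)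
    (hy : lexShift (cyclicExt y) (n - t) ≤ toLex (cyclicExt y)) (hyi : y i = false) :
    x i = false := by
  have hle : cyclicExt x i ≤ cyclicExt y i :=
    apply_le_of_le_last_period (cyclicExt_periodic x) (cyclicExt_periodic y) hxt htn hy
      (fun a ha => cyclicExt_eq_of_lt (fun j hj => eq_of_mem_FF hyF hxF (hfirst j hj)) i.isLt.le ha)
      ht fun a hta han => by
        lift a to Fin n using han
        rw [cyclicExt_val, cyclicExt_val]
        by_cases ha : a ∈ I0 ∪ I1
        · exact (eq_of_mem_FF hxF hyF ha).le
        · exact (hlast a hta ha).trans_le (Bool.false_le _)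
  rw [cyclicExt_val, cyclicExt_val, hyi] at hle
  exact Bool.eq_false_of_le_false hle

end Fixings

theorem strict_lexmax_exists_general {n : ℕ} {Γ : Subgroup (Equiv.Perm (Fin n))}
    (hΓ : Γ ≤ Subgroup.zpowers (finRotate n)) {I0 I1 : Finset (Fin n)} {i : Fin n}
    (hi : i ∉ I0 ∪ I1) (hfirst : ∀ j < i, j ∈ I0 ∪ I1)
    (hcomp : ∀ γ ∈ Γ, ∀ b : Bool, ∃ x ∈ FF I0 I1, lexGe x (permAct γ x) ∧ x i = b)
    (hne : ∃ x ∈ FF I0 I1, ∀ γ ∈ Γ, lexGe x (permAct γ x)) :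
    ∃ x ∈ FF I0 I1, ∀ γ ∈ Γ, γ ≠ 1 → lexGt x (permAct γ x) := by
  have := i.neZero
  obtain ⟨x, hxF, hx⟩ := hne
  have hmax := shiftMax_cyclicExt hx
  have hcomp_shift : ∀ s ∈ shiftExponents Γ, ∀ b, ∃ y ∈ FF I0 I1,
      lexShift (cyclicExt y) s ≤ toLex (cyclicExt y) ∧ y i = b := fun s hs b => by
    simpa only [lexGe_permAct_iff] using hcomp _ (Γ.inv_mem hs) b
  by_contra hnone
  have hnot : ∀ z ∈ FF I0 I1, ¬ StrictShiftMax (shiftExponents Γ) n (cyclicExt z) :=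
    fun z hzF hz => hnone ⟨z, hzF, hz.lexGt_permAct hΓ⟩
  obtain ⟨t, htΓ, ht, htn, hxt, hmin⟩ := hmax.exists_minimal_period
    (fun _ => sub_mem_shiftExponents) (cyclicExt_periodic x) (hnot x hxF)
  have htt : t + t ≤ n := hmin t htΓ ht htn hxt
  have hlast : ∀ j : Fin n, n - t ≤ j → j ∉ I0 ∪ I1 → x j = false := fun j htj hj =>
    Bool.eq_false_of_not_eq_true fun hxj =>
      hnot _ (mem_FF_of_eqOn hxF fun k hk =>
          Function.update_of_ne (ne_of_mem_of_not_mem hk hj) _ _)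
        (strictShiftMax_cyclicExt_update_false hmax hxt ht htt hmin htj hxj)
  have hxi : x i = false := by
    obtain ⟨y, hyF, hy, hyi⟩ := hcomp_shift (n - t) (sub_mem_shiftExponents htΓ htn.le) false
    exact apply_eq_false_of_first_free hxF hyF hfirst hxt ht htn.le hlast hy hyi
  have hit : i < t := by
    obtain ⟨y, hyF, hy, hyi⟩ := hcomp_shift t htΓ true
    exact lt_period_of_lexShift_le hxt hy ht
      (fun a ha => cyclicExt_eq_of_lt (fun j hj => eq_of_mem_FF hyF hxF (hfirst j hj)) i.isLt.le ha)
      (by simp [cyclicExt_val, hxi, hyi])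
  exact hnot _ (mem_FF_of_eqOn hxF fun j hj => Finset.piecewise_eq_of_mem _ _ _ hj)
    (strictShiftMax_cyclicExt_piecewise (fun _ hs => mul_mem_shiftExponents hs) hmax hxF hi hfirst
      hxi (by omega) fun s hs => hcomp_shift s hs true)

theorem strict_lexmax_exists (n : ℕ)
    (Γ : Subgroup (Equiv.Perm (Fin n)))
    (hΓ : Γ ≤ Subgroup.zpowers (finRotate n))
    (I0 I1 : Finset (Fin n)) (hdis : Disjoint I0 I1)
    (hproper : ∃ i : Fin n, i ∉ I0 ∪ I1)
    (hcomp : ∀ γ ∈ Γ, ∀ i : Fin n, i ∉ I0 ∪ I1 → ∀ b : Bool,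
      ∃ x ∈ FF I0 I1, lexGe x (permAct γ x) ∧ x i = b)
    (hne : ∃ x ∈ FF I0 I1, ∀ γ ∈ Γ, lexGe x (permAct γ x)) :
    ∃ x ∈ FF I0 I1, ∀ γ ∈ Γ, γ ≠ 1 → lexGt x (permAct γ x) := by
  obtain ⟨i, hi, hmin⟩ := wellFounded_lt.has_min {i | i ∉ I0 ∪ I1} hproper
  exact strict_lexmax_exists_general hΓ hi (fun j hj => not_not.1 fun h => hmin j h hj)
    (fun γ hγ => hcomp γ hγ i hi) hne
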